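/- Let d ≥ 1 and let σ : Δ_d → ℝ^N be C^1 on all open faces and satisfy Stokes. Then the cone σ̂ : Δ_{d+1} → ℝ^N is C^1 on all open faces and satisfies Stokes. -/

import Mathlib

open MeasureTheory Set

noncomputable section

/-- The standard `d`-simplex `Δ_d ⊆ ℝ^d`. -/
def simplexSet (d : ℕ) : Set (Fin d → ℝ) :=
  {b | (∀ i, 0 ≤ b i) ∧ ∑ i, b i ≤ 1}

/-- The `i`-th face map `δ_i : Δ_d → Δ_{d+1}` (as a map of ambient spaces):
`δ_0 b = (1 - ∑ b, b)` and, for `i ≥ 1`, `δ_i` inserts a `0` at position `i - 1`. -/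
def faceMap (d : ℕ) (i : Fin (d + 2)) (b : Fin d → ℝ) : Fin (d + 1) → ℝ :=
  if h : i = 0 then Fin.cons (1 - ∑ j, b j) b
  else Fin.insertNth (i.pred h) 0 b

/-- Continuous `d`-multilinear forms on `ℝ^N` (on finite-dimensional spaces every
multilinear form is automatically continuous). -/
abbrev Form (N d : ℕ) : Type :=
  ContinuousMultilinearMap ℝ (fun _ : Fin d => (Fin N → ℝ)) ℝ

/-- A multilinear form is alternating if it vanishes whenever two arguments agree. -/
def IsAlternatingForm {N d : ℕ} (A : Form N d) : Prop :=
  ∀ v : Fin d → (Fin N → ℝ), ∀ i j, v i = v j → i ≠ j → A v = 0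

/-- The pullback density `ω(σ(x))(Dσ(x)e_1, …, Dσ(x)e_d)` of a `d`-form `ω` along `σ`
at `x`, where `e_1, …, e_d` is the standard basis of `ℝ^d`. -/
def pullbackDensity {d N : ℕ} (σ : (Fin d → ℝ) → (Fin N → ℝ))
    (ω : (Fin N → ℝ) → Form N d) (x : Fin d → ℝ) : ℝ :=
  ω (σ x) fun j => fderiv ℝ σ x (Pi.single j 1)

/-- A simplex `σ : Δ_d → ℝ^N` has finite volume if for every family of alternating
`d`-forms, continuous on `σ(Δ_d)`, the pullback density along `σ` is Lebesgue
integrable on the interior of `Δ_d`. -/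
def FiniteVolume {d N : ℕ} (σ : (Fin d → ℝ) → (Fin N → ℝ)) : Prop :=
  ∀ ω : (Fin N → ℝ) → Form N d,
    (∀ y ∈ σ '' simplexSet d, IsAlternatingForm (ω y)) →
    ContinuousOn ω (σ '' simplexSet d) →
    IntegrableOn (pullbackDensity σ ω) (interior (simplexSet d))

/-- The pullback density of the exterior derivative `dω` of a `d`-form `ω` along a
`(d+1)`-simplex `σ` at `x`:
`dω(y)(v_0, …, v_d) = ∑ i, (-1)^i (Dω(y)v_i)(v_0, …, v̂_i, …, v_d)` with `v_i = Dσ(x)e_i`. -/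
def pullbackDensityD {d N : ℕ} (σ : (Fin (d + 1) → ℝ) → (Fin N → ℝ))
    (ω : (Fin N → ℝ) → Form N d) (x : Fin (d + 1) → ℝ) : ℝ :=
  ∑ i : Fin (d + 1), (-1 : ℝ) ^ (i : ℕ) *
    fderiv ℝ ω (σ x) (fderiv ℝ σ x (Pi.single i 1))
      (fun j => fderiv ℝ σ x (Pi.single (i.succAbove j) 1))

/-- A `(d+1)`-simplex `σ` (C¹ on all open faces) satisfies Stokes if it and all of its
faces have finite volume, and Stokes' formula
`∫_{Δ_{d+1}} σ^*(dω) = ∑ i (-1)^i ∫_{Δ_d} (σ ∘ δ_i)^*(ω)` holds for every C¹ family of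
alternating `d`-forms `ω` on an open neighbourhood of `σ(Δ_{d+1})`. -/
def SatisfiesStokes {d N : ℕ} (σ : (Fin (d + 1) → ℝ) → (Fin N → ℝ)) : Prop :=
  FiniteVolume σ ∧ (∀ i : Fin (d + 2), FiniteVolume (σ ∘ faceMap d i)) ∧
  ∀ (V : Set (Fin N → ℝ)) (ω : (Fin N → ℝ) → Form N d),
    IsOpen V → σ '' simplexSet (d + 1) ⊆ V →
    (∀ y ∈ V, IsAlternatingForm (ω y)) → ContDiffOn ℝ 1 ω V →
    ∫ x in interior (simplexSet (d + 1)), pullbackDensityD σ ω x =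
      ∑ i : Fin (d + 2), (-1 : ℝ) ^ (i : ℕ) *
        ∫ b in interior (simplexSet d), pullbackDensity (σ ∘ faceMap d i) ω b

/-- `σ : Δ_d → ℝ^N` is C¹ on all open faces: it is continuous on `Δ_d`, C¹ on the
interior of `Δ_d`, and all iterated face composites `σ ∘ δ_{i_1} ∘ ⋯ ∘ δ_{i_k}` have
the same property. -/
def C1OnOpenFaces (N : ℕ) : ∀ d, ((Fin d → ℝ) → (Fin N → ℝ)) → Prop
  | 0, σ => ContinuousOn σ (simplexSet 0) ∧ ContDiffOn ℝ 1 σ (interior (simplexSet 0))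
  | d + 1, σ => ContinuousOn σ (simplexSet (d + 1)) ∧
      ContDiffOn ℝ 1 σ (interior (simplexSet (d + 1))) ∧
      ∀ i : Fin (d + 2), C1OnOpenFaces N d (σ ∘ faceMap d i)

/-- `σ` and all of its iterated face composites have finite volume. -/
def FiniteVolumeFaces (N : ℕ) : ∀ d, ((Fin d → ℝ) → (Fin N → ℝ)) → Prop
  | 0, σ => FiniteVolume σ
  | d + 1, σ => FiniteVolume σ ∧ ∀ i : Fin (d + 2), FiniteVolumeFaces N d (σ ∘ faceMap d i)

/-- `σ` and all of its iterated face composites satisfy Stokes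
(a `0`-simplex satisfies Stokes by convention). -/
def SatisfiesStokesFaces (N : ℕ) : ∀ d, ((Fin d → ℝ) → (Fin N → ℝ)) → Prop
  | 0, _ => True
  | d + 1, σ => SatisfiesStokes σ ∧ ∀ i : Fin (d + 2), SatisfiesStokesFaces N d (σ ∘ faceMap d i)

/-- The cone `σ̂ : Δ_{d+1} → ℝ^N` over a simplex `σ : Δ_d → ℝ^N`:
`σ̂(a_0, …, a_d) = A ⬝ σ(a_1/A, …, a_d/A)` with `A = ∑ a_i` if `A ≠ 0`, and `0` else. -/
def cone {d N : ℕ} (σ : (Fin d → ℝ) → (Fin N → ℝ)) (a : Fin (d + 1) → ℝ) : Fin N → ℝ :=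
  if (∑ i, a i) = 0 then 0 else (∑ i, a i) • σ fun j => a j.succ / ∑ i, a i

/-- The map `q(t, b) = ((1-t)(1-∑ b), (1-t)b_1, …, (1-t)b_d)` from `[0,1] × Δ_d`
onto `Δ_{d+1}`. -/
def qMap (d : ℕ) (p : ℝ × (Fin d → ℝ)) : Fin (d + 1) → ℝ :=
  Fin.cons ((1 - p.1) * (1 - ∑ j, p.2 j)) fun j => (1 - p.1) * p.2 j

/-- The inverse `i(a_0, …, a_d) = (1 - A, a_1/A, …, a_d/A)`, `A = ∑ a_i`, of `q`. -/
def iMap (d : ℕ) (a : Fin (d + 1) → ℝ) : ℝ × (Fin d → ℝ) :=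
  (1 - ∑ i, a i, fun j => a j.succ / ∑ i, a i)

/-!
In the coordinates `(s, b) ↦ s • σ b` on the cone, the pullback density of a `(d+1)`-form `Ω` is the
density along `σ` of the `d`-form `K_s Ω = s^d ι_y Ω(s y)`. Hence integrability and integrals over
the cone reduce to those of densities along `σ` depending on a parameter `s ∈ [0, 1]`, and finite
volume of `σ` gives finite volume of the cone, as such densities are combinations of finitely many
densities of constant forms with bounded coefficients.

For Stokes' formula, Cartan's formula `d K_s ω + K_s dω = ∂_s (s^n ω(s y))` for an `n`-form `ω`
splits the integral of `dω` over the cone in two. By the fundamental theorem of calculus the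
`∂_s`-term integrates to `∫ σ^* ω`, the contribution of the base of the cone, while Stokes' formula
for `σ` and the form `K_s ω`, at each fixed `s`, turns the other term into the contributions of the
cones over the faces of `σ`.
-/

/-! ### The simplex and its faces -/

lemma mem_interior_simplexSet {d : ℕ} {b : Fin d → ℝ} :
    b ∈ interior (simplexSet d) ↔ (∀ i, 0 < b i) ∧ ∑ i, b i < 1 := by
  constructor
  · intro hb
    have himage (L : (Fin d → ℝ) →L[ℝ] ℝ) (hL : Function.Surjective L) {s : Set ℝ}
        (hs : MapsTo L (simplexSet d) s) : L b ∈ interior s := by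
      have hb' : b ∈ interior (L ⁻¹' s) := interior_mono hs hb
      rwa [L.interior_preimage hL] at hb'
    refine ⟨fun i => ?_, ?_⟩
    · simpa using himage (.proj i) (Function.surjective_eval i) (s := Ici 0) fun x hx => hx.1 i
    · rcases isEmpty_or_nonempty (Fin d) with _ | ⟨⟨i⟩⟩
      · simp
      have hsurj : Function.Surjective (∑ i, .proj i : (Fin d → ℝ) →L[ℝ] ℝ) :=
        fun r => ⟨Pi.single i r, by simp⟩
      simpa using himage _ hsurj (s := Iic 1) fun x hx => by simpa using hx.2
  · intro hb
    have hopen : IsOpen {x : Fin d → ℝ | (∀ i, 0 < x i) ∧ ∑ i, x i < 1} := by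
      simp only [ofPred_and, ofPred_forall]
      exact (isOpen_iInter_of_finite fun i => isOpen_lt continuous_const (continuous_apply i)).inter
        (isOpen_lt (by fun_prop) continuous_const)
    have hsub : {x : Fin d → ℝ | (∀ i, 0 < x i) ∧ ∑ i, x i < 1} ⊆ simplexSet d :=
      fun x hx => ⟨fun i => (hx.1 i).le, hx.2.le⟩
    exact interior_maximal hsub hopen hb

lemma isCompact_simplexSet (d : ℕ) : IsCompact (simplexSet d) := by
  have hclosed : IsClosed (simplexSet d) := by
    simp only [simplexSet, ofPred_and, ofPred_forall]
    exact (isClosed_iInter fun i => isClosed_le continuous_const (continuous_apply i)).inter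
      (isClosed_le (by fun_prop) continuous_const)
  refine isCompact_Icc.of_isClosed_subset hclosed (fun b hb => ⟨hb.1, fun i => ?_⟩ :
    simplexSet d ⊆ Icc 0 1)
  exact (Finset.single_le_sum (fun j _ => hb.1 j) (Finset.mem_univ i)).trans hb.2

lemma mapsTo_faceMap {d : ℕ} (i : Fin (d + 2)) :
    MapsTo (faceMap d i) (simplexSet d) (simplexSet (d + 1)) := by
  intro b hb
  cases i using Fin.cases with
  | zero =>
    simp only [faceMap, simplexSet, mem_ofPred_eq, Fin.forall_fin_succ, Fin.sum_univ_succ]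
    exact ⟨⟨by simpa using hb.2, by simpa using hb.1⟩, by simp⟩
  | succ i =>
    have hface : faceMap d i.succ b = i.insertNth 0 b := by
      simp [faceMap]
    rw [hface]
    exact ⟨i.forall_iff_succAbove.2 ⟨by simp, by simpa using hb.1⟩,
      by simpa [Fin.sum_univ_succAbove _ i] using hb.2⟩

/-! ### The cone and its faces -/

section Cone

variable {d N : ℕ} {σ : (Fin d → ℝ) → (Fin N → ℝ)} {a : Fin (d + 1) → ℝ}

/- For `∑ a = 0` both sides vanish, whatever `(iMap d a).2` is. -/
lemma cone_eq_smul (σ : (Fin d → ℝ) → (Fin N → ℝ)) (a : Fin (d + 1) → ℝ) :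
    cone σ a = (∑ i, a i) • σ (iMap d a).2 := by
  unfold cone
  split_ifs with h <;> simp [h, iMap]

lemma cone_comp_faceMap_zero (σ : (Fin d → ℝ) → (Fin N → ℝ)) : cone σ ∘ faceMap d 0 = σ := by
  funext b
  simp [cone, faceMap]

lemma sum_faceMap_succ (i : Fin (d + 1)) (b : Fin d → ℝ) :
    ∑ j, faceMap d i.succ b j = ∑ j, b j := by
  simp [faceMap, Fin.sum_univ_succAbove _ i]

lemma iMap_faceMap_succ (i : Fin (d + 2)) {a : Fin (d + 1) → ℝ} (ha : ∑ j, a j ≠ 0) :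
    (iMap (d + 1) (faceMap (d + 1) i.succ a)).2 = faceMap d i (iMap d a).2 := by
  funext j
  simp only [iMap, sum_faceMap_succ]
  cases i using Fin.cases with
  | zero =>
    cases j using Fin.cases with
    | zero =>
      simp only [faceMap, Fin.succ_ne_zero, ↓reduceDIte, Fin.pred_succ, Fin.insertNth_zero,
        Fin.cons_succ, Fin.cons_zero]
      rw [← Finset.sum_div, eq_sub_iff_add_eq, ← add_div]
      exact (congrArg (· / _) (Fin.sum_univ_succ a).symm).trans (div_self ha)
    | succ l => simp [faceMap]
  | succ i =>
    cases j using i.succAboveCases with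
    | x => simp [faceMap]
    | p l =>
      have hl : i.succ.insertNth (α := fun _ => ℝ) 0 a (i.succAbove l).succ = a l.succ := by
        rw [← Fin.succ_succAbove_succ, Fin.insertNth_apply_succAbove]
      simp [faceMap, hl]

lemma cone_comp_faceMap_succ (σ : (Fin (d + 1) → ℝ) → (Fin N → ℝ)) (i : Fin (d + 2)) :
    cone σ ∘ faceMap (d + 1) i.succ = cone (σ ∘ faceMap d i) := by
  funext a
  by_cases ha : ∑ j, a j = 0
  · simp [cone, sum_faceMap_succ, ha]
  · simp [cone_eq_smul, sum_faceMap_succ, iMap_faceMap_succ i ha]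

lemma iMap_snd_mem_simplexSet (ha : a ∈ simplexSet (d + 1)) : (iMap d a).2 ∈ simplexSet d := by
  have hsum : 0 ≤ ∑ i, a i := Finset.sum_nonneg fun i _ => ha.1 i
  refine ⟨fun j => div_nonneg (ha.1 _) hsum, ?_⟩
  simp only [iMap, ← Finset.sum_div]
  refine div_le_one_of_le₀ ?_ hsum
  rw [Fin.sum_univ_succ]
  exact le_add_of_nonneg_left (ha.1 0)

lemma sum_pos_of_mem_interior_simplexSet (ha : a ∈ interior (simplexSet (d + 1))) :
    0 < ∑ i, a i :=
  Finset.sum_pos (fun i _ => (mem_interior_simplexSet.1 ha).1 i) Finset.univ_nonempty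

lemma iMap_snd_mem_interior_simplexSet (ha : a ∈ interior (simplexSet (d + 1))) :
    (iMap d a).2 ∈ interior (simplexSet d) := by
  have hsum := sum_pos_of_mem_interior_simplexSet ha
  rw [mem_interior_simplexSet] at ha ⊢
  refine ⟨fun j => div_pos (ha.1 _) hsum, ?_⟩
  simp only [iMap, ← Finset.sum_div]
  rw [div_lt_one hsum, Fin.sum_univ_succ]
  exact lt_add_of_pos_left _ (ha.1 0)

lemma contDiffAt_iMap_snd {n : WithTop ℕ∞} (ha : ∑ i, a i ≠ 0) :
    ContDiffAt ℝ n (fun x => (iMap d x).2) a :=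
  contDiffAt_pi.2 fun _ => ContDiffAt.div (by fun_prop) (by fun_prop) ha

lemma continuousOn_cone (hσ : ContinuousOn σ (simplexSet d)) :
    ContinuousOn (cone σ) (simplexSet (d + 1)) := by
  rw [funext (cone_eq_smul σ)]
  intro a ha
  have hsum : ContinuousAt (fun x : Fin (d + 1) → ℝ => ∑ i, x i) a := by fun_prop
  by_cases h : ∑ i, a i = 0
  · obtain ⟨C, hC⟩ := (isCompact_simplexSet d).exists_bound_of_continuousOn hσ
    have hbdd : Filter.IsBoundedUnder (· ≤ ·) (nhdsWithin a (simplexSet (d + 1)))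
        (norm ∘ fun x => σ (iMap d x).2) :=
      Filter.isBoundedUnder_of_eventually_le (a := C) <| eventually_mem_nhdsWithin.mono
        fun x hx => hC _ (iMap_snd_mem_simplexSet hx)
    have htendsto := hsum.continuousWithinAt (s := simplexSet (d + 1)).tendsto
    simp only [ContinuousWithinAt, h, zero_smul] at htendsto ⊢
    exact NormedField.tendsto_zero_smul_of_tendsto_zero_of_bounded htendsto hbdd
  · exact hsum.continuousWithinAt.smul <| ContinuousWithinAt.comp (t := simplexSet d)
      (f := fun x => (iMap d x).2) (hσ _ (iMap_snd_mem_simplexSet ha))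
      (contDiffAt_iMap_snd (n := 0) h).continuousAt.continuousWithinAt
      fun _ => iMap_snd_mem_simplexSet

lemma contDiffOn_cone {n : WithTop ℕ∞} (hσ : ContDiffOn ℝ n σ (interior (simplexSet d))) :
    ContDiffOn ℝ n (cone σ) (interior (simplexSet (d + 1))) := by
  rw [funext (cone_eq_smul σ)]
  have hsum : ContDiff ℝ n fun a : Fin (d + 1) → ℝ => ∑ i, a i := by fun_prop
  refine hsum.contDiffOn.smul (hσ.comp (fun a ha => ?_)
    fun _ => iMap_snd_mem_interior_simplexSet)
  exact (contDiffAt_iMap_snd (sum_pos_of_mem_interior_simplexSet ha).ne').contDiffWithinAt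

end Cone

lemma C1OnOpenFaces.continuousOn {d N : ℕ} {σ : (Fin d → ℝ) → (Fin N → ℝ)}
    (hσ : C1OnOpenFaces N d σ) : ContinuousOn σ (simplexSet d) := by
  cases d <;> exact hσ.1

lemma C1OnOpenFaces.contDiffOn {d N : ℕ} {σ : (Fin d → ℝ) → (Fin N → ℝ)}
    (hσ : C1OnOpenFaces N d σ) : ContDiffOn ℝ 1 σ (interior (simplexSet d)) := by
  cases d with
  | zero => exact hσ.2
  | succ d => exact hσ.2.1

lemma c1OnOpenFaces_cone {N : ℕ} : ∀ {d : ℕ} {σ : (Fin d → ℝ) → (Fin N → ℝ)},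
    C1OnOpenFaces N d σ → C1OnOpenFaces N (d + 1) (cone σ)
  | 0, σ, hσ => by
    refine ⟨continuousOn_cone hσ.continuousOn, contDiffOn_cone hσ.contDiffOn, fun i => ?_⟩
    have hconst : cone σ ∘ faceMap 0 i = fun _ => cone σ (faceMap 0 i 0) :=
      funext fun b => by rw [Function.comp_apply, Subsingleton.elim b 0]
    rw [hconst]
    exact ⟨continuousOn_const, contDiffOn_const⟩
  | d + 1, σ, hσ => by
    refine ⟨continuousOn_cone hσ.continuousOn, contDiffOn_cone hσ.contDiffOn, fun i => ?_⟩
    cases i using Fin.cases with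
    | zero => rwa [cone_comp_faceMap_zero]
    | succ i =>
      rw [cone_comp_faceMap_succ]
      exact c1OnOpenFaces_cone (hσ.2.2 i)

/-! ### Radial coordinates on the simplex -/

section RadialChart

variable {d N : ℕ}

lemma sum_qMap (p : ℝ × (Fin d → ℝ)) : ∑ i, qMap d p i = 1 - p.1 := by
  simp only [qMap, Fin.sum_univ_succ, Fin.cons_zero, Fin.cons_succ, ← Finset.mul_sum]
  ring

lemma iMap_qMap {p : ℝ × (Fin d → ℝ)} (hp : 1 - p.1 ≠ 0) : iMap d (qMap d p) = p := by
  ext j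
  · simp [iMap, sum_qMap]
  · simp only [iMap, sum_qMap]
    exact mul_div_cancel_left₀ _ hp

lemma qMap_iMap {a : Fin (d + 1) → ℝ} (ha : ∑ i, a i ≠ 0) : qMap d (iMap d a) = a := by
  funext i
  cases i using Fin.cases with
  | zero =>
    simp only [qMap, iMap, Fin.cons_zero, ← Finset.sum_div, sub_sub_cancel, mul_sub, mul_one,
      mul_div_cancel₀ _ ha]
    exact sub_eq_of_eq_add (Fin.sum_univ_succ a)
  | succ j => simp [qMap, iMap, mul_div_cancel₀ _ ha]

lemma cone_qMap (σ : (Fin d → ℝ) → (Fin N → ℝ)) (p : ℝ × (Fin d → ℝ)) :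
    cone σ (qMap d p) = (1 - p.1) • σ p.2 := by
  rw [cone_eq_smul, sum_qMap]
  by_cases hp : 1 - p.1 = 0
  · simp [hp]
  · rw [iMap_qMap hp]

lemma qMap_mem_simplexSet {p : ℝ × (Fin d → ℝ)} (ht : p.1 ∈ Icc 0 1)
    (hb : p.2 ∈ simplexSet d) : qMap d p ∈ simplexSet (d + 1) := by
  have ht' : 0 ≤ 1 - p.1 := sub_nonneg.2 ht.2
  refine ⟨Fin.forall_fin_succ.2 ⟨?_, fun j => ?_⟩, ?_⟩
  · exact mul_nonneg ht' (sub_nonneg.2 hb.2)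
  · exact mul_nonneg ht' (hb.1 j)
  · rw [sum_qMap]
    linarith [ht.1]

lemma qMap_mem_interior_simplexSet {p : ℝ × (Fin d → ℝ)} (ht : p.1 ∈ Ioo 0 1)
    (hb : p.2 ∈ interior (simplexSet d)) : qMap d p ∈ interior (simplexSet (d + 1)) := by
  have ht' : 0 < 1 - p.1 := sub_pos.2 ht.2
  rw [mem_interior_simplexSet] at hb ⊢
  refine ⟨Fin.forall_fin_succ.2 ⟨?_, fun j => ?_⟩, ?_⟩
  · exact mul_pos ht' (sub_pos.2 hb.2)
  · exact mul_pos ht' (hb.1 j)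
  · rw [sum_qMap]
    linarith [ht.1]

lemma bijOn_qMap :
    BijOn (qMap d) (Ioo 0 1 ×ˢ interior (simplexSet d)) (interior (simplexSet (d + 1))) := by
  refine InvOn.bijOn (f' := iMap d) ⟨fun p hp => ?_, fun a ha => ?_⟩ (fun p hp => ?_) fun a ha => ?_
  · exact iMap_qMap (sub_pos.2 hp.1.2).ne'
  · exact qMap_iMap (sum_pos_of_mem_interior_simplexSet ha).ne'
  · exact qMap_mem_interior_simplexSet hp.1 hp.2
  · exact ⟨⟨sub_pos.2 (mem_interior_simplexSet.1 ha).2,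
      sub_lt_self _ (sum_pos_of_mem_interior_simplexSet ha)⟩, iMap_snd_mem_interior_simplexSet ha⟩

/-- The chart `(s, b) ↦ q(1 - s, b)` of `Δ_{d+1}`, with `(s, b)` encoded as a single vector of
`ℝ^{d+1}`. In it the cone over `σ` reads `(s, b) ↦ s • σ b`. -/
def radialChart (d : ℕ) (x : Fin (d + 1) → ℝ) : Fin (d + 1) → ℝ :=
  qMap d (1 - x 0, Fin.tail x)

lemma cone_comp_radialChart (σ : (Fin d → ℝ) → (Fin N → ℝ)) :
    cone σ ∘ radialChart d = fun x => x 0 • σ (Fin.tail x) := by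
  funext x
  rw [Function.comp_apply, radialChart, cone_qMap, sub_sub_cancel]

lemma radialChart_mem_interior {s : ℝ} {b : Fin d → ℝ} (hs : s ∈ Ioo 0 1)
    (hb : b ∈ interior (simplexSet d)) :
    radialChart d (Fin.cons s b) ∈ interior (simplexSet (d + 1)) :=
  qMap_mem_interior_simplexSet ⟨sub_pos.2 hs.2, sub_lt_self _ hs.1⟩ hb

lemma smul_mem_image_cone {σ : (Fin d → ℝ) → (Fin N → ℝ)} {s : ℝ} {b : Fin d → ℝ}
    (hs : s ∈ Icc 0 1) (hb : b ∈ simplexSet d) : s • σ b ∈ cone σ '' simplexSet (d + 1) :=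
  ⟨qMap d (1 - s, b), qMap_mem_simplexSet ⟨sub_nonneg.2 hs.2, sub_le_self _ hs.1⟩ hb, by
    rw [cone_qMap, sub_sub_cancel]⟩

lemma bijOn_radialChart :
    BijOn (radialChart d)
      (MeasurableEquiv.piFinSuccAbove (fun _ => ℝ) 0 ⁻¹' Ioo 0 1 ×ˢ interior (simplexSet d))
      (interior (simplexSet (d + 1))) := by
  refine bijOn_qMap.comp (InvOn.bijOn (f' := fun p => Fin.cons (1 - p.1) p.2)
    ⟨fun x _ => ?_, fun p _ => ?_⟩ (fun x hx => ?_) fun p hp => ?_)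
  · simp
  · simp
  · exact ⟨⟨sub_pos.2 hx.1.2, sub_lt_self _ hx.1.1⟩, hx.2⟩
  · exact ⟨⟨sub_pos.2 hp.1.2, sub_lt_self _ hp.1.1⟩, hp.2⟩

/-- The derivative of `radialChart d` at `x`. -/
def radialChartDeriv (d : ℕ) (x : Fin (d + 1) → ℝ) : (Fin (d + 1) → ℝ) →L[ℝ] (Fin (d + 1) → ℝ) :=
  .pi <| Fin.cons
    (x 0 • -(∑ j : Fin d, .proj j.succ) + (1 - ∑ j : Fin d, x j.succ) • .proj 0)
    fun j => x 0 • .proj j.succ + x j.succ • .proj 0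

lemma hasFDerivAt_radialChart (x : Fin (d + 1) → ℝ) :
    HasFDerivAt (radialChart d) (radialChartDeriv d x) x := by
  have hproj (i : Fin (d + 1)) : HasFDerivAt (fun y : Fin (d + 1) → ℝ => y i) (.proj i) x :=
    hasFDerivAt_apply (𝕜 := ℝ) i x
  have hsum : HasFDerivAt (fun y : Fin (d + 1) → ℝ => 1 - ∑ j : Fin d, y j.succ)
      (-∑ j : Fin d, .proj j.succ : (Fin (d + 1) → ℝ) →L[ℝ] ℝ) x :=
    (HasFDerivAt.fun_sum fun j _ => hproj j.succ).const_sub 1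
  refine hasFDerivAt_pi.2 <| Fin.forall_fin_succ.2 ⟨?_, fun j => ?_⟩
  · simpa [radialChart, qMap, Fin.tail] using! (hproj 0).mul hsum
  · simpa [radialChart, qMap, Fin.tail] using! (hproj 0).mul (hproj j.succ)

lemma det_radialChartDeriv (x : Fin (d + 1) → ℝ) : (radialChartDeriv d x).det = x 0 ^ d := by
  set J := LinearMap.toMatrix' (radialChartDeriv d x).toLinearMap with hJ
  have hJ_zero (k) : J 0 k = x 0 * -(∑ j : Fin d, if j.succ = k then 1 else 0) +
      (1 - ∑ j : Fin d, x j.succ) * (if 0 = k then 1 else 0) := by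
    simp [hJ, radialChartDeriv, LinearMap.toMatrix'_apply, Pi.single_apply]
  have hJ_succ (j : Fin d) (k) :
      J j.succ k = x 0 * (if j.succ = k then 1 else 0) + x j.succ * (if 0 = k then 1 else 0) := by
    simp [hJ, radialChartDeriv, LinearMap.toMatrix'_apply, Pi.single_apply]
  -- The coordinates of `radialChart d x` sum to `x 0`, so the rows of `J` sum to `e₀`.
  have hrows : ∑ i, (1 : Fin (d + 1) → ℝ) i • J i = Pi.single 0 1 := by
    ext k
    calc (∑ i, (1 : Fin (d + 1) → ℝ) i • J i) k = ∑ i, J i k := by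
          rw [Fintype.sum_apply]; simp
      _ = (Pi.single 0 1 : Fin (d + 1) → ℝ) k := by
        simp only [Fin.sum_univ_succ, hJ_zero, hJ_succ, Finset.sum_add_distrib, ← Finset.mul_sum,
          ← Finset.sum_mul, Pi.single_apply, @eq_comm _ k]
        ring
  have htriangular : (J.updateRow 0 (Pi.single 0 1)).BlockTriangular OrderDual.toDual := by
    intro i k hik
    have hik : i < k := hik
    cases i using Fin.cases with
    | zero => simp [hik.ne']
    | succ j => simp [hJ_succ, hik.ne, ((Fin.zero_le _).trans_lt hik).ne]
  calc (radialChartDeriv d x).det = J.det := (LinearMap.det_toMatrix' _).symm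
    _ = (J.updateRow 0 (Pi.single 0 1)).det := by
      rw [← hrows, Matrix.det_updateRow_sum, Pi.one_apply, one_smul]
    _ = x 0 ^ d := by
      rw [Matrix.det_of_isLowerTriangular _ htriangular]
      simp [Fin.prod_univ_succ, hJ_succ, (Fin.succ_ne_zero _).symm]

variable {F : Type*} [NormedAddCommGroup F] [NormedSpace ℝ F]

lemma integrableOn_interior_simplexSet_succ_iff {g : (Fin (d + 1) → ℝ) → F} :
    IntegrableOn g (interior (simplexSet (d + 1))) ↔
      IntegrableOn (fun z : ℝ × (Fin d → ℝ) => z.1 ^ d • g (radialChart d (Fin.cons z.1 z.2)))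
        (Ioo 0 1 ×ˢ interior (simplexSet d)) := by
  have hmp := volume_preserving_piFinSuccAbove (fun _ : Fin (d + 1) => ℝ) 0
  have hset : MeasurableSet (Ioo (0 : ℝ) 1 ×ˢ interior (simplexSet d)) :=
    measurableSet_Ioo.prod isOpen_interior.measurableSet
  rw [← bijOn_radialChart.image_eq, integrableOn_image_iff_integrableOn_abs_det_fderiv_smul volume
    (hmp.measurable hset) (fun x _ => (hasFDerivAt_radialChart x).hasFDerivWithinAt)
    bijOn_radialChart.injOn, ← hmp.integrableOn_comp_preimage
    (MeasurableEquiv.measurableEmbedding _)]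
  refine integrableOn_congr_fun (fun x hx => ?_) (hmp.measurable hset)
  have hx0 : 0 < x 0 := hx.1.1
  simp [det_radialChartDeriv, abs_of_pos hx0]

lemma integral_interior_simplexSet_succ (g : (Fin (d + 1) → ℝ) → F) :
    ∫ a in interior (simplexSet (d + 1)), g a =
      ∫ z in Ioo (0 : ℝ) 1 ×ˢ interior (simplexSet d),
        z.1 ^ d • g (radialChart d (Fin.cons z.1 z.2)) := by
  have hmp := volume_preserving_piFinSuccAbove (fun _ : Fin (d + 1) => ℝ) 0
  have hset : MeasurableSet (Ioo (0 : ℝ) 1 ×ˢ interior (simplexSet d)) :=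
    measurableSet_Ioo.prod isOpen_interior.measurableSet
  rw [← bijOn_radialChart.image_eq, integral_image_eq_integral_abs_det_fderiv_smul volume
    (hmp.measurable hset) (fun x _ => (hasFDerivAt_radialChart x).hasFDerivWithinAt)
    bijOn_radialChart.injOn, ← hmp.setIntegral_preimage_emb
    (MeasurableEquiv.measurableEmbedding _)]
  refine setIntegral_congr_fun (hmp.measurable hset) fun x hx => ?_
  have hx0 : 0 < x 0 := hx.1.1
  simp [det_radialChartDeriv, abs_of_pos hx0]

end RadialChart

/-! ### The radial homotopy operator -/

section RadialHomotopy

open ContinuousAlternatingMap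

variable {𝕜 E F : Type*} [NontriviallyNormedField 𝕜] [NormedAddCommGroup E] [NormedSpace 𝕜 E]
  [NormedAddCommGroup F] [NormedSpace 𝕜 F] {n : ℕ}

/-- The interior product `ι_y f = f(y, ·, …, ·)` of a vector `y` with an alternating form `f`, as a
continuous bilinear map. -/
def interiorProduct : E →L[𝕜] (E [⋀^Fin (n + 1)]→L[𝕜] F) →L[𝕜] E [⋀^Fin n]→L[𝕜] F :=
  curryLeftLI.toContinuousLinearMap.flip

@[simp]
lemma interiorProduct_apply_apply (f : E [⋀^Fin (n + 1)]→L[𝕜] F) (y : E) (v : Fin n → E) :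
    interiorProduct y f v = f (Matrix.vecCons y v) := rfl

/- Expanding the alternatization along the new first vector `y` gives `D y`, and the remaining terms
are the alternatization of the contracted family. -/
lemma alternatizeUncurryFin_interiorProduct_comp (D : E →L[𝕜] E [⋀^Fin (n + 1)]→L[𝕜] F) (y : E) :
    alternatizeUncurryFin (interiorProduct y ∘L D) +
      interiorProduct y (alternatizeUncurryFin D) = D y := by
  ext v
  have hremove (i : Fin (n + 1)) :
      i.succ.removeNth (Matrix.vecCons y v) = Matrix.vecCons y (i.removeNth v) := by
    ext j : 1
    cases j using Fin.cases <;> simp [Fin.removeNth]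
  simp [alternatizeUncurryFin_apply, Fin.sum_univ_succ (n := n + 1), hremove, pow_succ]

/-- The form `ι_{∂/∂s}` of the pullback of the `(n+1)`-form `ω` along `(s, y) ↦ s • y`, at the
point `(s, y)`. Its integral over `s ∈ [0, 1]` is the homotopy operator of the Poincaré lemma. -/
def radialContraction (ω : E → E [⋀^Fin (n + 1)]→L[𝕜] F) (s : 𝕜) (y : E) : E [⋀^Fin n]→L[𝕜] F :=
  s ^ n • interiorProduct y (ω (s • y))

/-- The derivative with respect to `s` of the pullback `y ↦ s ^ (n + 1) • ω (s • y)` of the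
`(n+1)`-form `ω` under the dilation by `s`. -/
def radialDeriv (ω : E → E [⋀^Fin (n + 1)]→L[𝕜] F) (s : 𝕜) (y : E) : E [⋀^Fin (n + 1)]→L[𝕜] F :=
  ((n + 1) * s ^ n) • ω (s • y) + s ^ (n + 1) • fderiv 𝕜 ω (s • y) y

variable {ω : E → E [⋀^Fin (n + 1)]→L[𝕜] F} {s : 𝕜} {y : E}

lemma hasDerivAt_radialDeriv (hω : DifferentiableAt 𝕜 ω (s • y)) :
    HasDerivAt (fun r => r ^ (n + 1) • ω (r • y)) (radialDeriv ω s y) s := by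
  have hline : HasDerivAt (fun r : 𝕜 => r • y) y s := by
    simpa using (hasDerivAt_id s).smul_const y
  have hpow : HasDerivAt (fun r : 𝕜 => r ^ (n + 1)) ((n + 1) * s ^ n) s := by
    simpa using hasDerivAt_pow (n + 1) s
  exact (hpow.smul (hω.hasFDerivAt.comp_hasDerivAt s hline)).congr_deriv (add_comm _ _)

lemma hasFDerivAt_radialContraction (hω : DifferentiableAt 𝕜 ω (s • y)) :
    HasFDerivAt (radialContraction ω s) (s ^ n • ((ω (s • y)).curryLeft +
      s • interiorProduct y ∘L fderiv 𝕜 ω (s • y))) y := by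
  have hdilate : HasFDerivAt (fun x : E => s • x) (s • ContinuousLinearMap.id 𝕜 E) y :=
    (hasFDerivAt_id y).const_smul s
  convert! ((interiorProduct.hasFDerivAt.clm_apply
    (hω.hasFDerivAt.comp y hdilate)).const_smul (s ^ n)) using 2
  ext u v
  simp [add_comm]

/-- **Cartan's homotopy formula** for the Euler vector field. -/
lemma extDeriv_radialContraction_add (hω : DifferentiableAt 𝕜 ω (s • y)) :
    extDeriv (radialContraction ω s) y + radialContraction (extDeriv ω) s y =
      radialDeriv ω s y := by
  have hextDeriv : extDeriv (radialContraction ω s) y = s ^ n • ((n + 1 : 𝕜) • ω (s • y) +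
      s • alternatizeUncurryFin (interiorProduct y ∘L fderiv 𝕜 ω (s • y))) := by
    rw [extDeriv, (hasFDerivAt_radialContraction hω).fderiv,
      alternatizeUncurryFin_smul (S := 𝕜), alternatizeUncurryFin_add,
      alternatizeUncurryFin_smul (S := 𝕜), alternatizeUncurryFin_curryLeft,
      ← Nat.cast_smul_eq_nsmul 𝕜]
    push_cast
    rfl
  rw [hextDeriv, radialDeriv, ← alternatizeUncurryFin_interiorProduct_comp]
  simp only [radialContraction, extDeriv]
  module

lemma contDiffAt_radialContraction {k : WithTop ℕ∞} (hω : ContDiffAt 𝕜 k ω (s • y)) :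
    ContDiffAt 𝕜 k (radialContraction ω s) y := by
  have hdilate : ContDiffAt 𝕜 k (fun x => ω (s • x)) y :=
    ContDiffAt.comp (g := ω) y hω (contDiffAt_id.const_smul s)
  exact (interiorProduct.contDiff.contDiffAt.clm_apply hdilate).const_smul (s ^ n)

variable {V : Set E}

lemma continuousOn_radialContraction (hω : ContinuousOn ω V) :
    ContinuousOn (fun p : 𝕜 × E => radialContraction ω p.1 p.2) {p | p.1 • p.2 ∈ V} := by
  have hdilate : ContinuousOn (fun p : 𝕜 × E => ω (p.1 • p.2)) {p | p.1 • p.2 ∈ V} :=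
    hω.comp continuous_smul.continuousOn fun _ hp => hp
  exact (continuousOn_fst.pow n).smul
    ((interiorProduct.continuous.comp_continuousOn continuousOn_snd).clm_apply hdilate)

lemma continuousOn_radialDeriv (hω : ContinuousOn ω V) (hω' : ContinuousOn (fderiv 𝕜 ω) V) :
    ContinuousOn (fun p : 𝕜 × E => radialDeriv ω p.1 p.2) {p | p.1 • p.2 ∈ V} := by
  have hsmul : ContinuousOn (fun p : 𝕜 × E => p.1 • p.2) {p | p.1 • p.2 ∈ V} :=
    continuous_smul.continuousOn
  exact ((continuousOn_const.mul (continuousOn_fst.pow n)).smul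
    (hω.comp hsmul fun _ hp => hp)).add ((continuousOn_fst.pow (n + 1)).smul
      ((hω'.comp hsmul fun _ hp => hp).clm_apply continuousOn_snd))

lemma integral_radialDeriv_apply {E F : Type*} [NormedAddCommGroup E] [NormedSpace ℝ E]
    [NormedAddCommGroup F] [NormedSpace ℝ F] [CompleteSpace F] {V : Set E}
    {ω : E → E [⋀^Fin (n + 1)]→L[ℝ] F} (hV : IsOpen V) (hω : ContDiffOn ℝ 1 ω V) {y : E}
    (hy : ∀ s ∈ Icc (0 : ℝ) 1, s • y ∈ V) (v : Fin (n + 1) → E) :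
    ∫ s in (0 : ℝ)..1, radialDeriv ω s y v = ω y v := by
  let ev := ContinuousAlternatingMap.apply ℝ E F v
  rw [← uIcc_of_le zero_le_one] at hy
  have hderiv (s : ℝ) (hs : s ∈ uIcc 0 1) :
      HasDerivAt (fun r : ℝ => ev (r ^ (n + 1) • ω (r • y))) (radialDeriv ω s y v) s :=
    ev.hasFDerivAt.comp_hasDerivAt s <| hasDerivAt_radialDeriv <|
      (hω.differentiableOn one_ne_zero).differentiableAt (hV.mem_nhds (hy s hs))
  have hcont : ContinuousOn (fun s => radialDeriv ω s y v) (uIcc 0 1) :=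
    ev.continuous.comp_continuousOn <|
      (continuousOn_radialDeriv hω.continuousOn (hω.continuousOn_fderiv_of_isOpen hV le_rfl)).comp
        (Continuous.prodMk_left y).continuousOn hy
  rw [intervalIntegral.integral_eq_sub_of_hasDerivAt hderiv hcont.intervalIntegrable]
  simp [ev]

end RadialHomotopy

/-! ### Densities of alternating forms -/

section AltDensity

variable {E : Type*} [NormedAddCommGroup E] [NormedSpace ℝ E] {n : ℕ} {σ : (Fin n → ℝ) → E}

/-- The counterpart of `pullbackDensity` for a family `ω` of bundled continuous alternating
forms. -/
def altDensity (σ : (Fin n → ℝ) → E) (ω : E → E [⋀^Fin n]→L[ℝ] ℝ) (x : Fin n → ℝ) : ℝ :=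
  ω (σ x) fun j => fderiv ℝ σ x (Pi.single j 1)

lemma altDensity_comp {φ : (Fin n → ℝ) → (Fin n → ℝ)} {x : Fin n → ℝ}
    (hσ : DifferentiableAt ℝ σ (φ x)) (hφ : DifferentiableAt ℝ φ x)
    (ω : E → E [⋀^Fin n]→L[ℝ] ℝ) :
    altDensity (σ ∘ φ) ω x = (fderiv ℝ φ x).det * altDensity σ ω (φ x) := by
  let e := Pi.basisFun ℝ (Fin n)
  let B := (ω (σ (φ x))).toAlternatingMap.compLinearMap (fderiv ℝ σ (φ x)).toLinearMap
  have hdet : e.det (fderiv ℝ φ x ∘ e) = (fderiv ℝ φ x).det :=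
    (e.det_comp _ _).trans (by simp [e.det_self, ContinuousLinearMap.det])
  calc altDensity (σ ∘ φ) ω x = B (fderiv ℝ φ x ∘ e) := by
        rw [altDensity, fderiv_comp x hσ hφ]
        simp [B, e, Function.comp_def]
    _ = B e * e.det (fderiv ℝ φ x ∘ e) := congr($(B.eq_smul_basis_det e) _)
    _ = (fderiv ℝ φ x).det * altDensity σ ω (φ x) := by
        rw [hdet, mul_comm]
        simp [B, e, altDensity]

lemma altDensity_smul_tail {x : Fin (n + 1) → ℝ} (hσ : DifferentiableAt ℝ σ (Fin.tail x))
    (ω : E → E [⋀^Fin (n + 1)]→L[ℝ] ℝ) :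
    altDensity (fun x : Fin (n + 1) → ℝ => x 0 • σ (Fin.tail x)) ω x =
      altDensity σ (radialContraction ω (x 0)) (Fin.tail x) := by
  have hcoord (i : Fin (n + 1)) : HasFDerivAt (fun y : Fin (n + 1) → ℝ => y i) (.proj i) x :=
    hasFDerivAt_apply (𝕜 := ℝ) i x
  have htail : HasFDerivAt (fun y : Fin (n + 1) → ℝ => Fin.tail y)
      (.pi fun j : Fin n => .proj j.succ) x :=
    hasFDerivAt_pi.2 fun j : Fin n => hcoord j.succ
  have hderiv (v : Fin (n + 1) → ℝ) :
      fderiv ℝ (fun y : Fin (n + 1) → ℝ => y 0 • σ (Fin.tail y)) x v =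
        x 0 • fderiv ℝ σ (Fin.tail x) (Fin.tail v) + v 0 • σ (Fin.tail x) :=
    congr($(((hcoord 0).smul (hσ.hasFDerivAt.comp x htail)).fderiv) v)
  have htail_zero : Fin.tail (Pi.single 0 1 : Fin (n + 1) → ℝ) = 0 := by
    ext j; simp [Fin.tail]
  have htail_succ (j : Fin n) :
      Fin.tail (Pi.single j.succ 1 : Fin (n + 1) → ℝ) = Pi.single j 1 := by
    ext k; simp [Fin.tail, Pi.single_apply]
  have hvec : (fun j => fderiv ℝ (fun y : Fin (n + 1) → ℝ => y 0 • σ (Fin.tail y)) x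
      (Pi.single j 1)) = Matrix.vecCons (σ (Fin.tail x))
        (x 0 • fun j => fderiv ℝ σ (Fin.tail x) (Pi.single j 1)) := by
    funext j
    cases j using Fin.cases <;> simp [hderiv, htail_zero, htail_succ]
  rw [altDensity, hvec, ← interiorProduct_apply_apply]
  exact (ContinuousAlternatingMap.map_smul_univ _ (fun _ => x 0) _).trans
    (by simp [altDensity, radialContraction])

end AltDensity

section ConeDensity

variable {d N : ℕ} {σ : (Fin d → ℝ) → (Fin N → ℝ)}

lemma pow_smul_altDensity_cone (hσ : ContDiffOn ℝ 1 σ (interior (simplexSet d))) {s : ℝ}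
    (hs : s ∈ Ioo 0 1) {b : Fin d → ℝ} (hb : b ∈ interior (simplexSet d))
    (ω : (Fin N → ℝ) → (Fin N → ℝ) [⋀^Fin (d + 1)]→L[ℝ] ℝ) :
    s ^ d • altDensity (cone σ) ω (radialChart d (Fin.cons s b)) =
      altDensity σ (radialContraction ω s) b := by
  have hσb : DifferentiableAt ℝ σ b :=
    (hσ.differentiableOn one_ne_zero).differentiableAt (isOpen_interior.mem_nhds hb)
  have hcone : DifferentiableAt ℝ (cone σ) (radialChart d (Fin.cons s b)) :=
    ((contDiffOn_cone hσ).differentiableOn one_ne_zero).differentiableAt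
      (isOpen_interior.mem_nhds (radialChart_mem_interior hs hb))
  have hchart := hasFDerivAt_radialChart (Fin.cons s b : Fin (d + 1) → ℝ)
  calc s ^ d • altDensity (cone σ) ω (radialChart d (Fin.cons s b))
      = altDensity (cone σ ∘ radialChart d) ω (Fin.cons s b) := by
        rw [altDensity_comp hcone hchart.differentiableAt, hchart.fderiv, det_radialChartDeriv,
          Fin.cons_zero, smul_eq_mul]
    _ = altDensity (fun x => x 0 • σ (Fin.tail x)) ω (Fin.cons s b) := by
        rw [cone_comp_radialChart]
    _ = altDensity σ (radialContraction ω s) b := altDensity_smul_tail hσb ω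

variable {ω : (Fin N → ℝ) → (Fin N → ℝ) [⋀^Fin (d + 1)]→L[ℝ] ℝ}

lemma integrableOn_altDensity_cone_iff (hσ : ContDiffOn ℝ 1 σ (interior (simplexSet d))) :
    IntegrableOn (altDensity (cone σ) ω) (interior (simplexSet (d + 1))) ↔
      IntegrableOn (fun z : ℝ × (Fin d → ℝ) => altDensity σ (radialContraction ω z.1) z.2)
        (Ioo 0 1 ×ˢ interior (simplexSet d)) := by
  rw [integrableOn_interior_simplexSet_succ_iff]
  exact integrableOn_congr_fun (fun z hz => pow_smul_altDensity_cone hσ hz.1 hz.2 ω)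
    (measurableSet_Ioo.prod isOpen_interior.measurableSet)

lemma integral_altDensity_cone (hσ : ContDiffOn ℝ 1 σ (interior (simplexSet d))) :
    ∫ a in interior (simplexSet (d + 1)), altDensity (cone σ) ω a =
      ∫ z in Ioo (0 : ℝ) 1 ×ˢ interior (simplexSet d),
        altDensity σ (radialContraction ω z.1) z.2 := by
  rw [integral_interior_simplexSet_succ]
  exact setIntegral_congr_fun (measurableSet_Ioo.prod isOpen_interior.measurableSet)
    fun z hz => pow_smul_altDensity_cone hσ hz.1 hz.2 ω

end ConeDensity

/-! ### Bundled and unbundled alternating forms -/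

section Bundling

open ContinuousAlternatingMap

section FiniteDimensional

variable {𝕜 E F ι : Type*} [NontriviallyNormedField 𝕜] [NormedAddCommGroup E] [NormedSpace 𝕜 E]
  [FiniteDimensional 𝕜 E] [NormedAddCommGroup F] [NormedSpace 𝕜 F] [FiniteDimensional 𝕜 F]
  [Finite ι]

instance finiteDimensional_continuousMultilinearMap :
    FiniteDimensional 𝕜 (ContinuousMultilinearMap 𝕜 (fun _ : ι => E) F) :=
  .of_injective (ContinuousMultilinearMap.toMultilinearMapLinear (R' := 𝕜) (A := 𝕜))
    ContinuousMultilinearMap.toMultilinearMap_injective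

instance finiteDimensional_continuousAlternatingMap : FiniteDimensional 𝕜 (E [⋀^ι]→L[𝕜] F) :=
  .of_injective (toContinuousMultilinearMapCLM 𝕜).toLinearMap toContinuousMultilinearMap_injective

end FiniteDimensional

variable {d n N : ℕ}

lemma isAlternatingForm_toContinuousMultilinearMap (f : (Fin N → ℝ) [⋀^Fin n]→L[ℝ] ℝ) :
    IsAlternatingForm f.toContinuousMultilinearMap :=
  fun v _ _ => f.map_eq_zero_of_eq v

lemma exists_forall_toContinuousMultilinearMap_eq (N n : ℕ) :
    ∃ P : Form N n →L[ℝ] (Fin N → ℝ) [⋀^Fin n]→L[ℝ] ℝ,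
      ∀ A, IsAlternatingForm A → (P A).toContinuousMultilinearMap = A := by
  obtain ⟨P, hP⟩ := ContinuousLinearMap.HasLeftInverse.of_injective_of_finiteDimensional
    (f := (toContinuousMultilinearMapCLM ℝ : (Fin N → ℝ) [⋀^Fin n]→L[ℝ] ℝ →L[ℝ] Form N n))
    toContinuousMultilinearMap_injective
  refine ⟨P, fun A hA => ?_⟩
  let A' : (Fin N → ℝ) [⋀^Fin n]→L[ℝ] ℝ := { A with map_eq_zero_of_eq' := hA }
  exact congr(($(hP A')).toContinuousMultilinearMap)

lemma finiteVolume_iff {σ : (Fin n → ℝ) → (Fin N → ℝ)} :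
    FiniteVolume σ ↔ ∀ ω : (Fin N → ℝ) → (Fin N → ℝ) [⋀^Fin n]→L[ℝ] ℝ,
      ContinuousOn ω (σ '' simplexSet n) →
        IntegrableOn (altDensity σ ω) (interior (simplexSet n)) := by
  refine ⟨fun h ω hω => ?_, fun h ω halt hω => ?_⟩
  · exact h _ (fun y _ => isAlternatingForm_toContinuousMultilinearMap (ω y))
      ((toContinuousMultilinearMapCLM ℝ).continuous.comp_continuousOn hω)
  · obtain ⟨P, hP⟩ := exists_forall_toContinuousMultilinearMap_eq N n
    refine (h (P ∘ ω) (P.continuous.comp_continuousOn hω)).congr_fun (fun x hx => ?_)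
      isOpen_interior.measurableSet
    exact congr($(hP _ (halt _ (mem_image_of_mem σ (interior_subset hx)))) _)

/-- Stokes' formula for the simplex `σ`, for bundled alternating forms and Mathlib's exterior
derivative. -/
def StokesFormula (σ : (Fin (d + 1) → ℝ) → (Fin N → ℝ)) : Prop :=
  ∀ (V : Set (Fin N → ℝ)) (ω : (Fin N → ℝ) → (Fin N → ℝ) [⋀^Fin d]→L[ℝ] ℝ),
    IsOpen V → σ '' simplexSet (d + 1) ⊆ V → ContDiffOn ℝ 1 ω V →
      ∫ x in interior (simplexSet (d + 1)), altDensity σ (extDeriv ω) x =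
        ∑ i : Fin (d + 2), (-1 : ℝ) ^ (i : ℕ) *
          ∫ b in interior (simplexSet d), altDensity (σ ∘ faceMap d i) ω b

variable {σ : (Fin (d + 1) → ℝ) → (Fin N → ℝ)} {V : Set (Fin N → ℝ)}
  {ω : (Fin N → ℝ) → Form N d} {ω' : (Fin N → ℝ) → (Fin N → ℝ) [⋀^Fin d]→L[ℝ] ℝ}

lemma pullbackDensityD_eq_altDensity_extDeriv {x : Fin (d + 1) → ℝ} (hV : V ∈ nhds (σ x))
    (hω' : DifferentiableAt ℝ ω' (σ x))
    (hωω' : ∀ y ∈ V, (ω' y).toContinuousMultilinearMap = ω y) :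
    pullbackDensityD σ ω x = altDensity σ (extDeriv ω') x := by
  have hω : HasFDerivAt ω (toContinuousMultilinearMapCLM ℝ ∘L fderiv ℝ ω' (σ x)) (σ x) :=
    ((toContinuousMultilinearMapCLM ℝ).hasFDerivAt.comp (σ x) hω'.hasFDerivAt).congr_of_eventuallyEq
      (Filter.eventually_of_mem hV fun y hy => (hωω' y hy).symm)
  simp only [pullbackDensityD, altDensity, hω.fderiv, extDeriv, alternatizeUncurryFin_apply,
    ContinuousLinearMap.comp_apply, zsmul_eq_mul, Int.cast_pow, Int.cast_neg, Int.cast_one]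
  rfl

lemma integral_pullbackDensityD_eq (hV : IsOpen V) (hσV : MapsTo σ (simplexSet (d + 1)) V)
    (hω' : DifferentiableOn ℝ ω' V) (hωω' : ∀ y ∈ V, (ω' y).toContinuousMultilinearMap = ω y) :
    ∫ x in interior (simplexSet (d + 1)), pullbackDensityD σ ω x =
      ∫ x in interior (simplexSet (d + 1)), altDensity σ (extDeriv ω') x := by
  refine setIntegral_congr_fun isOpen_interior.measurableSet fun x hx => ?_
  have hVx : V ∈ nhds (σ x) := hV.mem_nhds (hσV (interior_subset hx))
  exact pullbackDensityD_eq_altDensity_extDeriv hVx (hω'.differentiableAt hVx) hωω'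

lemma integral_pullbackDensity_comp_faceMap_eq (hσV : MapsTo σ (simplexSet (d + 1)) V)
    (hωω' : ∀ y ∈ V, (ω' y).toContinuousMultilinearMap = ω y) (i : Fin (d + 2)) :
    ∫ b in interior (simplexSet d), pullbackDensity (σ ∘ faceMap d i) ω b =
      ∫ b in interior (simplexSet d), altDensity (σ ∘ faceMap d i) ω' b :=
  setIntegral_congr_fun isOpen_interior.measurableSet fun _ hb =>
    congr($((hωω' _ (hσV (mapsTo_faceMap i (interior_subset hb)))).symm) _)

lemma satisfiesStokes_iff : SatisfiesStokes σ ↔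
    FiniteVolume σ ∧ (∀ i, FiniteVolume (σ ∘ faceMap d i)) ∧ StokesFormula σ := by
  refine and_congr_right fun _ => and_congr_right fun _ => ⟨fun h V ω hV hσV hω => ?_,
    fun h V ω hV hσV halt hω => ?_⟩
  · let L : (Fin N → ℝ) [⋀^Fin d]→L[ℝ] ℝ →L[ℝ] Form N d := toContinuousMultilinearMapCLM ℝ
    have hStokes := h V _ hV hσV (fun y _ => isAlternatingForm_toContinuousMultilinearMap (ω y))
      (L.contDiff.comp_contDiffOn hω)
    rw [← mapsTo_iff_image_subset] at hσV
    simpa only [integral_pullbackDensityD_eq hV hσV (hω.differentiableOn one_ne_zero)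
      fun _ _ => rfl, integral_pullbackDensity_comp_faceMap_eq hσV fun _ _ => rfl] using hStokes
  · obtain ⟨P, hP⟩ := exists_forall_toContinuousMultilinearMap_eq N d
    have hω' : ContDiffOn ℝ 1 (P ∘ ω) V := P.contDiff.comp_contDiffOn hω
    have hPω : ∀ y ∈ V, (P (ω y)).toContinuousMultilinearMap = ω y := fun y hy => hP _ (halt y hy)
    have hStokes := h V _ hV hσV hω'
    rw [← mapsTo_iff_image_subset] at hσV
    simp only [integral_pullbackDensityD_eq hV hσV (hω'.differentiableOn one_ne_zero) hPω,
      integral_pullbackDensity_comp_faceMap_eq hσV hPω]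
    exact hStokes

end Bundling

/-! ### Finite volume of the cone -/

section Prism

variable {n N : ℕ} {σ : (Fin n → ℝ) → (Fin N → ℝ)}

lemma integrableOn_altDensity_prod (hσ : FiniteVolume σ) {T : Set ℝ} (hT : IsCompact T)
    {η : ℝ → (Fin N → ℝ) → (Fin N → ℝ) [⋀^Fin n]→L[ℝ] ℝ}
    (hη : ContinuousOn (fun z : ℝ × (Fin n → ℝ) => η z.1 (σ z.2)) (T ×ˢ simplexSet n)) :
    IntegrableOn (fun z : ℝ × (Fin n → ℝ) => altDensity σ (η z.1) z.2)
      (T ×ˢ interior (simplexSet n)) := by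
  let basis := Module.finBasis ℝ ((Fin N → ℝ) [⋀^Fin n]→L[ℝ] ℝ)
  have hsub : T ×ˢ interior (simplexSet n) ⊆ T ×ˢ simplexSet n := prod_mono_right interior_subset
  have hmeas := hT.measurableSet.prod (isOpen_interior (s := simplexSet n)).measurableSet
  have hexpand (z : ℝ × (Fin n → ℝ)) : altDensity σ (η z.1) z.2 =
      ∑ i, basis.coord i (η z.1 (σ z.2)) * altDensity σ (fun _ => basis i) z.2 := by
    conv_lhs => rw [altDensity, ← basis.sum_repr (η z.1 (σ z.2))]
    simp only [ContinuousAlternatingMap.sum_apply, ContinuousAlternatingMap.smul_apply, smul_eq_mul,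
      Module.Basis.coord_apply, altDensity]
  simp only [hexpand]
  refine integrable_finsetSum _ fun i _ => ?_
  have hcoord : ContinuousOn (fun z : ℝ × (Fin n → ℝ) => basis.coord i (η z.1 (σ z.2)))
      (T ×ˢ simplexSet n) :=
    (LinearMap.continuous_of_finiteDimensional (basis.coord i)).comp_continuousOn hη
  obtain ⟨C, hC⟩ := (hT.prod (isCompact_simplexSet n)).exists_bound_of_continuousOn hcoord
  have hdensity : IntegrableOn (altDensity σ fun _ => basis i) (interior (simplexSet n)) :=
    finiteVolume_iff.1 hσ _ continuousOn_const
  refine Integrable.bdd_mul (c := C) ?_ ((hcoord.mono hsub).aestronglyMeasurable hmeas)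
    (ae_restrict_of_forall_mem hmeas fun z hz => hC z (hsub hz))
  have : IsFiniteMeasure (volume.restrict T) := ⟨by simpa using hT.measure_lt_top⟩
  rw [Measure.volume_eq_prod, ← Measure.prod_restrict]
  exact Integrable.comp_snd hdensity _

lemma integrableOn_altDensity_of_cone_image_subset (hσ : ContinuousOn σ (simplexSet n))
    (hvol : FiniteVolume σ) {V : Set (Fin N → ℝ)} (hV : cone σ '' simplexSet (n + 1) ⊆ V)
    {η : ℝ → (Fin N → ℝ) → (Fin N → ℝ) [⋀^Fin n]→L[ℝ] ℝ}
    (hη : ContinuousOn (fun p : ℝ × (Fin N → ℝ) => η p.1 p.2) {p | p.1 • p.2 ∈ V}) :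
    IntegrableOn (fun z : ℝ × (Fin n → ℝ) => altDensity σ (η z.1) z.2)
      (Ioo 0 1 ×ˢ interior (simplexSet n)) := by
  have hprism : ContinuousOn (fun z : ℝ × (Fin n → ℝ) => (z.1, σ z.2))
      (Icc 0 1 ×ˢ simplexSet n) :=
    continuousOn_fst.prodMk (hσ.comp continuousOn_snd fun _ hz => hz.2)
  exact (integrableOn_altDensity_prod hvol isCompact_Icc (hη.comp hprism
    fun z hz => hV (smul_mem_image_cone hz.1 hz.2))).mono_set (prod_mono_left Ioo_subset_Icc_self)

lemma finiteVolume_cone (hσ : ContinuousOn σ (simplexSet n))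
    (hσ' : ContDiffOn ℝ 1 σ (interior (simplexSet n))) (hvol : FiniteVolume σ) :
    FiniteVolume (cone σ) :=
  finiteVolume_iff.2 fun _ hω => (integrableOn_altDensity_cone_iff hσ').2 <|
    integrableOn_altDensity_of_cone_image_subset hσ hvol subset_rfl
      (continuousOn_radialContraction hω)

end Prism

/-! ### Stokes' formula for the cone -/

section StokesCone

variable {d N : ℕ} {σ : (Fin (d + 1) → ℝ) → (Fin N → ℝ)} {V : Set (Fin N → ℝ)}
  {ω : (Fin N → ℝ) → (Fin N → ℝ) [⋀^Fin (d + 1)]→L[ℝ] ℝ}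

lemma integrableOn_altDensity_radialDeriv (hσ : ContinuousOn σ (simplexSet (d + 1)))
    (hvol : FiniteVolume σ) (hV : IsOpen V) (hσV : cone σ '' simplexSet (d + 2) ⊆ V)
    (hω : ContDiffOn ℝ 1 ω V) :
    IntegrableOn (fun z : ℝ × (Fin (d + 1) → ℝ) => altDensity σ (radialDeriv ω z.1) z.2)
      (Ioo 0 1 ×ˢ interior (simplexSet (d + 1))) :=
  integrableOn_altDensity_of_cone_image_subset hσ hvol hσV
    (continuousOn_radialDeriv hω.continuousOn (hω.continuousOn_fderiv_of_isOpen hV le_rfl))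

lemma integrableOn_altDensity_radialContraction_extDeriv
    (hσ : ContinuousOn σ (simplexSet (d + 1))) (hvol : FiniteVolume σ) (hV : IsOpen V)
    (hσV : cone σ '' simplexSet (d + 2) ⊆ V) (hω : ContDiffOn ℝ 1 ω V) :
    IntegrableOn
      (fun z : ℝ × (Fin (d + 1) → ℝ) => altDensity σ (radialContraction (extDeriv ω) z.1) z.2)
      (Ioo 0 1 ×ˢ interior (simplexSet (d + 1))) := by
  have hdω : ContinuousOn (extDeriv ω) V :=
    (ContinuousAlternatingMap.alternatizeUncurryFinCLM ℝ (Fin N → ℝ) ℝ).continuous.comp_continuousOn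
      (hω.continuousOn_fderiv_of_isOpen hV le_rfl)
  exact integrableOn_altDensity_of_cone_image_subset hσ hvol hσV
    (continuousOn_radialContraction hdω)

lemma altDensity_extDeriv_radialContraction (hV : IsOpen V)
    (hσV : cone σ '' simplexSet (d + 2) ⊆ V) (hω : ContDiffOn ℝ 1 ω V) {s : ℝ}
    (hs : s ∈ Icc 0 1) {b : Fin (d + 1) → ℝ} (hb : b ∈ simplexSet (d + 1)) :
    altDensity σ (extDeriv (radialContraction ω s)) b =
      altDensity σ (radialDeriv ω s) b - altDensity σ (radialContraction (extDeriv ω) s) b := by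
  have hsb : DifferentiableAt ℝ ω (s • σ b) := (hω.differentiableOn one_ne_zero).differentiableAt
    (hV.mem_nhds (hσV (smul_mem_image_cone hs hb)))
  exact congr($(eq_sub_of_add_eq (extDeriv_radialContraction_add hsb)) _)

lemma integrableOn_altDensity_extDeriv_radialContraction
    (hσ : ContinuousOn σ (simplexSet (d + 1))) (hvol : FiniteVolume σ) (hV : IsOpen V)
    (hσV : cone σ '' simplexSet (d + 2) ⊆ V) (hω : ContDiffOn ℝ 1 ω V) :
    IntegrableOn
      (fun z : ℝ × (Fin (d + 1) → ℝ) => altDensity σ (extDeriv (radialContraction ω z.1)) z.2)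
      (Ioo 0 1 ×ˢ interior (simplexSet (d + 1))) :=
  ((integrableOn_altDensity_radialDeriv hσ hvol hV hσV hω).sub
    (integrableOn_altDensity_radialContraction_extDeriv hσ hvol hV hσV hω)).congr_fun
    (fun _ hz => (altDensity_extDeriv_radialContraction hV hσV hω (Ioo_subset_Icc_self hz.1)
      (interior_subset hz.2)).symm)
    (measurableSet_Ioo.prod isOpen_interior.measurableSet)

lemma integral_altDensity_radialDeriv (hσ : ContinuousOn σ (simplexSet (d + 1)))
    (hvol : FiniteVolume σ) (hV : IsOpen V) (hσV : cone σ '' simplexSet (d + 2) ⊆ V)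
    (hω : ContDiffOn ℝ 1 ω V) :
    ∫ z in Ioo (0 : ℝ) 1 ×ˢ interior (simplexSet (d + 1)), altDensity σ (radialDeriv ω z.1) z.2 =
      ∫ b in interior (simplexSet (d + 1)), altDensity σ ω b := by
  have hint := integrableOn_altDensity_radialDeriv hσ hvol hV hσV hω
  rw [Measure.volume_eq_prod, IntegrableOn, ← Measure.prod_restrict] at hint
  rw [Measure.volume_eq_prod, ← Measure.prod_restrict, integral_prod_symm _ hint]
  refine setIntegral_congr_fun isOpen_interior.measurableSet fun b hb => ?_
  simp only [← integral_Ioc_eq_integral_Ioo, ← intervalIntegral.integral_of_le zero_le_one]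
  exact integral_radialDeriv_apply hV hω
    (fun s hs => hσV (smul_mem_image_cone hs (interior_subset hb))) _

lemma StokesFormula.integral_altDensity_extDeriv_radialContraction (hStokes : StokesFormula σ)
    (hV : IsOpen V) (hσV : cone σ '' simplexSet (d + 2) ⊆ V) (hω : ContDiffOn ℝ 1 ω V) {s : ℝ}
    (hs : s ∈ Icc 0 1) :
    ∫ b in interior (simplexSet (d + 1)), altDensity σ (extDeriv (radialContraction ω s)) b =
      ∑ i : Fin (d + 2), (-1 : ℝ) ^ (i : ℕ) *
        ∫ b in interior (simplexSet d), altDensity (σ ∘ faceMap d i) (radialContraction ω s) b := by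
  refine hStokes ((s • ·) ⁻¹' V) _ (hV.preimage (continuous_const_smul s)) ?_ fun y hy =>
    (contDiffAt_radialContraction (hω.contDiffAt (hV.mem_nhds hy))).contDiffWithinAt
  rintro _ ⟨b, hb, rfl⟩
  exact hσV (smul_mem_image_cone hs hb)

lemma cone_comp_faceMap_image_subset (σ : (Fin (d + 1) → ℝ) → (Fin N → ℝ)) (i : Fin (d + 2)) :
    cone (σ ∘ faceMap d i) '' simplexSet (d + 1) ⊆ cone σ '' simplexSet (d + 2) := by
  rw [← cone_comp_faceMap_succ, image_comp]
  exact image_mono (mapsTo_faceMap _).image_subset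

lemma integral_altDensity_extDeriv_radialContraction_prod (hσ : C1OnOpenFaces N (d + 1) σ)
    (hvol : FiniteVolume σ) (hvolFaces : ∀ i, FiniteVolume (σ ∘ faceMap d i))
    (hStokes : StokesFormula σ) (hV : IsOpen V) (hσV : cone σ '' simplexSet (d + 2) ⊆ V)
    (hω : ContDiffOn ℝ 1 ω V) :
    ∫ z in Ioo (0 : ℝ) 1 ×ˢ interior (simplexSet (d + 1)),
        altDensity σ (extDeriv (radialContraction ω z.1)) z.2 =
      ∑ i : Fin (d + 2), (-1 : ℝ) ^ (i : ℕ) *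
        ∫ b in interior (simplexSet (d + 1)), altDensity (cone (σ ∘ faceMap d i)) ω b := by
  have hint := integrableOn_altDensity_extDeriv_radialContraction hσ.continuousOn hvol hV hσV hω
  have hface (i : Fin (d + 2)) : IntegrableOn (fun z : ℝ × (Fin d → ℝ) =>
      altDensity (σ ∘ faceMap d i) (radialContraction ω z.1) z.2)
      (Ioo 0 1 ×ˢ interior (simplexSet d)) :=
    integrableOn_altDensity_of_cone_image_subset (hσ.2.2 i).continuousOn (hvolFaces i)
      ((cone_comp_faceMap_image_subset σ i).trans hσV)
      (continuousOn_radialContraction hω.continuousOn)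
  simp only [Measure.volume_eq_prod, IntegrableOn, ← Measure.prod_restrict] at hint hface
  rw [Measure.volume_eq_prod, ← Measure.prod_restrict, integral_prod _ hint,
    setIntegral_congr_fun measurableSet_Ioo fun s hs =>
      hStokes.integral_altDensity_extDeriv_radialContraction hV hσV hω (Ioo_subset_Icc_self hs),
    integral_finsetSum _ fun i _ => (hface i).integral_prod_left.const_mul _]
  refine Finset.sum_congr rfl fun i _ => ?_
  rw [integral_const_mul, integral_altDensity_cone (hσ.2.2 i).contDiffOn, Measure.volume_eq_prod,
    ← Measure.prod_restrict, integral_prod _ (hface i)]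

/- The cone has `σ` as its zeroth face; its other faces are the cones over the faces of `σ`, with
their index shifted by one, whence the minus sign. -/
lemma integral_altDensity_cone_extDeriv (hσ : C1OnOpenFaces N (d + 1) σ)
    (hvol : FiniteVolume σ) (hvolFaces : ∀ i, FiniteVolume (σ ∘ faceMap d i))
    (hStokes : StokesFormula σ) (hV : IsOpen V) (hσV : cone σ '' simplexSet (d + 2) ⊆ V)
    (hω : ContDiffOn ℝ 1 ω V) :
    ∫ a in interior (simplexSet (d + 2)), altDensity (cone σ) (extDeriv ω) a =
      (∫ b in interior (simplexSet (d + 1)), altDensity σ ω b) -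
        ∑ i : Fin (d + 2), (-1 : ℝ) ^ (i : ℕ) *
          ∫ b in interior (simplexSet (d + 1)), altDensity (cone (σ ∘ faceMap d i)) ω b := by
  have hcartan : EqOn
      (fun z : ℝ × (Fin (d + 1) → ℝ) => altDensity σ (radialContraction (extDeriv ω) z.1) z.2)
      (fun z => altDensity σ (radialDeriv ω z.1) z.2 -
        altDensity σ (extDeriv (radialContraction ω z.1)) z.2)
      (Ioo 0 1 ×ˢ interior (simplexSet (d + 1))) := fun z hz => by
    simp only [altDensity_extDeriv_radialContraction hV hσV hω (Ioo_subset_Icc_self hz.1)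
      (interior_subset hz.2), sub_sub_cancel]
  rw [integral_altDensity_cone hσ.contDiffOn,
    setIntegral_congr_fun (measurableSet_Ioo.prod isOpen_interior.measurableSet) hcartan,
    integral_sub (integrableOn_altDensity_radialDeriv hσ.continuousOn hvol hV hσV hω)
      (integrableOn_altDensity_extDeriv_radialContraction hσ.continuousOn hvol hV hσV hω),
    integral_altDensity_radialDeriv hσ.continuousOn hvol hV hσV hω,
    integral_altDensity_extDeriv_radialContraction_prod hσ hvol hvolFaces hStokes hV hσV hω]

lemma satisfiesStokes_cone (hσ : C1OnOpenFaces N (d + 1) σ) (hStokes : SatisfiesStokes σ) :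
    SatisfiesStokes (cone σ) := by
  obtain ⟨hvol, hvolFaces, hformula⟩ := satisfiesStokes_iff.1 hStokes
  refine satisfiesStokes_iff.2 ⟨finiteVolume_cone hσ.continuousOn hσ.contDiffOn hvol, fun i => ?_,
    fun V ω hV hσV hω => ?_⟩
  · cases i using Fin.cases with
    | zero => rwa [cone_comp_faceMap_zero]
    | succ i =>
      rw [cone_comp_faceMap_succ]
      exact finiteVolume_cone (hσ.2.2 i).continuousOn (hσ.2.2 i).contDiffOn (hvolFaces i)
  · rw [integral_altDensity_cone_extDeriv hσ hvol hvolFaces hformula hV hσV hω,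
      Fin.sum_univ_succ (n := d + 2), cone_comp_faceMap_zero]
    simp only [cone_comp_faceMap_succ, Fin.val_succ, pow_succ, Fin.val_zero, pow_zero, one_mul,
      mul_neg_one, neg_mul, Finset.sum_neg_distrib, sub_eq_add_neg]

end StokesCone

/-- **Proposition 3.4.** If `σ : Δ_{d+1} → ℝ^N` (with `d + 1 ≥ 1`) is C¹ on all open
faces and satisfies Stokes, then so does its cone `σ̂ : Δ_{d+2} → ℝ^N`. -/
theorem cone_satisfiesStokes {d N : ℕ} (σ : (Fin (d + 1) → ℝ) → (Fin N → ℝ))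
    (h1 : C1OnOpenFaces N (d + 1) σ) (hs : SatisfiesStokes σ) :
    C1OnOpenFaces N (d + 2) (cone σ) ∧ SatisfiesStokes (cone σ) :=
  ⟨c1OnOpenFaces_cone h1, satisfiesStokes_cone h1 hs⟩

end
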